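/- arXiv:2003.11227 — 2 statements merged into one kernel-verified Lean document; each statement's English description precedes it below -/
import Mathlib

section
/- Let A'_π = [[A + B D_π C, B C_π],[B_π C, A_π]], B'_{π,w} = [[I_n],[0_{s×n}]] and B'_{π,z} = [[B D_π],[B_π]]. Then for every integer k ≥ 1, (A'_π)^k · B'_{π,w} = [[A^k],[0_{s×n}]] + Σ_{j=1}^{k} (A'_π)^{j-1} · B'_{π,z} · C · A^{k-j}. -/
open Matrix Finset

/-!
The embedding `W = [[I], [0]]` of the plant state intertwines the closed-loop matrix `M` with the
plant matrix `A` up to the measurement feedback: `M * W = W * A + Z * C`. Moving `W` to the left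
through `M ^ k` one factor at a time leaves `W * A ^ k` and one correction term for each factor, a
rectangular analogue of the telescoping of `x ^ k - y ^ k`.
-/

section

variable {R : Type*} [Semiring R]
variable {ι κ μ ν : Type*} [Fintype ι] [Fintype κ] [DecidableEq κ]

theorem pow_mul_eq_mul_pow_add_sum [DecidableEq ι]
    {M : Matrix ι ι R} {W E : Matrix ι κ R} {A : Matrix κ κ R} (h : M * W = W * A + E) (k : ℕ) :
    M ^ k * W = W * A ^ k + ∑ j ∈ range k, M ^ j * E * A ^ (k - 1 - j) := by
  induction k with
  | zero => simp
  | succ k ih =>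
    have shift : (∑ j ∈ range k, M ^ j * E * A ^ (k - 1 - j)) * A =
        ∑ j ∈ range k, M ^ j * E * A ^ (k - j) := by
      rw [Matrix.sum_mul]
      refine sum_congr rfl fun j hj => ?_
      have hjk : k - j = k - 1 - j + 1 := by have := mem_range.mp hj; omega
      rw [hjk, pow_succ, ← Matrix.mul_assoc]
    calc M ^ (k + 1) * W
        = M ^ k * W * A + M ^ k * E := by
          rw [pow_succ, Matrix.mul_assoc, h, Matrix.mul_add, ← Matrix.mul_assoc]
      _ = W * A ^ (k + 1) + (∑ j ∈ range k, M ^ j * E * A ^ (k - j) + M ^ k * E) := by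
          rw [ih, Matrix.add_mul, shift, pow_succ, ← Matrix.mul_assoc, add_assoc]
      _ = W * A ^ (k + 1) + ∑ j ∈ range (k + 1), M ^ j * E * A ^ (k + 1 - 1 - j) := by
          simp only [sum_range_succ, Nat.add_sub_cancel, Nat.sub_self, pow_zero, Matrix.mul_one]

variable [Fintype μ] [Fintype ν]

theorem closed_loop_mul_fromRows_one_zero
    (A : Matrix κ κ R) (B : Matrix κ μ R) (C : Matrix ν κ R) (Aπ : Matrix ι ι R)
    (Bπ : Matrix ι ν R) (Cπ : Matrix μ ι R) (Dπ : Matrix μ ν R) :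
    fromBlocks (A + B * Dπ * C) (B * Cπ) (Bπ * C) Aπ *
        fromRows (1 : Matrix κ κ R) (0 : Matrix ι κ R) =
      fromRows (1 : Matrix κ κ R) (0 : Matrix ι κ R) * A + fromRows (B * Dπ) Bπ * C := by
  rw [fromBlocks_mul_fromRows, fromRows_mul, fromRows_mul]
  ext (i | i) j <;> simp

theorem closed_loop_power_mul_Bw_general [DecidableEq ι]
    (A : Matrix κ κ R) (B : Matrix κ μ R) (C : Matrix ν κ R) (Aπ : Matrix ι ι R)
    (Bπ : Matrix ι ν R) (Cπ : Matrix μ ι R) (Dπ : Matrix μ ν R) (k : ℕ) :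
    fromBlocks (A + B * Dπ * C) (B * Cπ) (Bπ * C) Aπ ^ k *
        fromRows (1 : Matrix κ κ R) (0 : Matrix ι κ R) =
      fromRows (A ^ k) (0 : Matrix ι κ R) + ∑ j ∈ Icc 1 k,
        fromBlocks (A + B * Dπ * C) (B * Cπ) (Bπ * C) Aπ ^ (j - 1) *
          fromRows (B * Dπ) Bπ * C * A ^ (k - j) := by
  have embed_pow : fromRows (1 : Matrix κ κ R) (0 : Matrix ι κ R) * A ^ k =
      fromRows (A ^ k) (0 : Matrix ι κ R) := by
    rw [fromRows_mul, Matrix.one_mul, Matrix.zero_mul]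
  rw [pow_mul_eq_mul_pow_add_sum (closed_loop_mul_fromRows_one_zero A B C Aπ Bπ Cπ Dπ) k,
    embed_pow, ← Ico_add_one_right_eq_Icc, sum_Ico_eq_sum_range]
  simp only [Nat.add_sub_cancel, Nat.add_sub_cancel_left, Nat.sub_sub, Matrix.mul_assoc]

end

/-- for the closed-loop matrix `A'_π = [[A + B D_π C, B C_π],[B_π C, A_π]]`,
`B'_{π,w} = [[I_n],[0]]` and `B'_{π,z} = [[B D_π],[B_π]]`, for every `k ≥ 1`,
`(A'_π)^k · B'_{π,w} = [[A^k],[0]] + Σ_{j=1}^{k} (A'_π)^{j-1} · B'_{π,z} · C · A^{k-j}`. -/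
theorem closed_loop_power_mul_Bw {n s p m : ℕ}
    (A : Matrix (Fin n) (Fin n) ℝ) (B : Matrix (Fin n) (Fin p) ℝ)
    (C : Matrix (Fin m) (Fin n) ℝ)
    (Aπ : Matrix (Fin s) (Fin s) ℝ) (Bπ : Matrix (Fin s) (Fin m) ℝ)
    (Cπ : Matrix (Fin p) (Fin s) ℝ) (Dπ : Matrix (Fin p) (Fin m) ℝ) :
    ∀ k : ℕ, 1 ≤ k →
      (Matrix.fromBlocks (A + B * Dπ * C) (B * Cπ) (Bπ * C) Aπ) ^ k *
          Matrix.fromRows (1 : Matrix (Fin n) (Fin n) ℝ) (0 : Matrix (Fin s) (Fin n) ℝ) =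
        Matrix.fromRows (A ^ k) (0 : Matrix (Fin s) (Fin n) ℝ) +
          ∑ j ∈ Finset.Icc 1 k,
            (Matrix.fromBlocks (A + B * Dπ * C) (B * Cπ) (Bπ * C) Aπ) ^ (j - 1) *
              Matrix.fromRows (B * Dπ) Bπ * C * A ^ (k - j) := by
  intro k _
  exact closed_loop_power_mul_Bw_general A B C Aπ Bπ Cπ Dπ k
end

section
/- Let Φ ∈ ℝ^{N×d}, G ∈ ℝ^{m×d}, E ∈ ℝ^{N×m}, M ∈ ℝ^{N×m}, λ > 0, and set Y = Φ Gᵀ + E + M, V = λ I_d + Φᵀ Φ, and Ĝᵀ = V^{-1} Φᵀ Y (the ridge-regression estimator). Then √(Tr((Ĝ − G) V (Ĝ − G)ᵀ)) ≤ √(Tr(Eᵀ Φ V^{-1} Φᵀ E)) + √(Tr(Mᵀ Φ V^{-1} Φᵀ M)) + √λ · ‖G‖_F. -/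
open Matrix Finset

-- Use the Frobenius norm on matrices.
attribute [local instance] Matrix.frobeniusNormedAddCommGroup

/-!
Write `Λ = λ I`. Since `Gᵀ = V⁻¹ (Λ + Φᵀ Φ) Gᵀ`, the estimation error is
`Ĝ - G = Eᵀ Φ V⁻¹ + Mᵀ Φ V⁻¹ - G Λ V⁻¹`, and the claim is the triangle inequality for the
seminorm `A ↦ √(Tr (A V Aᵀ))`. In this seminorm `A V⁻¹` has size `√(Tr (A V⁻¹ Aᵀ))`, which gives
the two noise terms; for the bias `A = G Λ`, what remains is `Λ V⁻¹ Λ ≤ Λ`. This holds for every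
positive semidefinite `Λ`, because `Λ ≤ V`.
-/

theorem posSemidef_sub_mul_inv_add_mul {R n : Type*} [CommRing R] [PartialOrder R] [StarRing R]
    [AddLeftMono R] [Fintype n] [DecidableEq n] {S T : Matrix n n R} (hS : S.PosSemidef)
    (hT : T.PosSemidef) (hu : IsUnit (S + T)) : (S - S * (S + T)⁻¹ * S).PosSemidef := by
  set V := S + T with hV
  have hVinv : (V⁻¹)ᴴ = V⁻¹ := (hS.isHermitian.add hT.isHermitian).inv.eq
  have hcancel : V⁻¹ * (V * (V⁻¹ * S)) = V⁻¹ * S :=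
    nonsing_inv_mul_cancel_left _ _ ((isUnit_iff_isUnit_det V).mp hu)
  -- the two terms on the right are those of `⟪x - y, S (x - y)⟫ + ⟪y, T y⟫` at its minimizer
  -- `y = V⁻¹ S x`
  have hdecomp : S - S * V⁻¹ * S =
      (1 - V⁻¹ * S)ᴴ * S * (1 - V⁻¹ * S) + (V⁻¹ * S)ᴴ * T * (V⁻¹ * S) := by
    rw [eq_sub_of_add_eq' hV.symm]
    simp only [conjTranspose_sub, conjTranspose_mul, conjTranspose_one, hS.isHermitian.eq, hVinv,
      Matrix.sub_mul, Matrix.mul_sub, Matrix.one_mul, Matrix.mul_one, Matrix.mul_assoc, hcancel]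
    abel
  rw [hdecomp]
  exact (hS.conjTranspose_mul_mul_same _).add (hT.conjTranspose_mul_mul_same _)

/-- The Frobenius norm weighted by `W`, `√(Tr (A W Aᴴ))`, in which the estimation error, the noise
and the regularization bias are measured. It is a seminorm when `W` is positive semidefinite; taking
the real part changes nothing when `W` is Hermitian. -/
noncomputable def weightedFrobeniusNorm {𝕜 m n : Type*} [RCLike 𝕜] [Fintype m] [Fintype n]
    (W : Matrix n n 𝕜) (A : Matrix m n 𝕜) : ℝ :=
  √(RCLike.re (A * W * Aᴴ).trace)

section WeightedFrobeniusNorm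

open scoped ComplexOrder

variable {𝕜 l m n : Type*} [RCLike 𝕜] [Fintype l] [Fintype m] [Fintype n]

theorem weightedFrobeniusNorm_mul (W : Matrix n n 𝕜) (A : Matrix m l 𝕜) (B : Matrix l n 𝕜) :
    weightedFrobeniusNorm W (A * B) = weightedFrobeniusNorm (B * W * Bᴴ) A := by
  simp only [weightedFrobeniusNorm, conjTranspose_mul, Matrix.mul_assoc]

theorem weightedFrobeniusNorm_mul_inv [DecidableEq n] {V : Matrix n n 𝕜} (hV : V.IsHermitian)
    (hu : IsUnit V) (A : Matrix m n 𝕜) :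
    weightedFrobeniusNorm V (A * V⁻¹) = weightedFrobeniusNorm V⁻¹ A := by
  rw [weightedFrobeniusNorm_mul, hV.inv.eq,
    nonsing_inv_mul _ ((isUnit_iff_isUnit_det V).mp hu), Matrix.one_mul]

theorem weightedFrobeniusNorm_one [DecidableEq n] (A : Matrix m n 𝕜) :
    weightedFrobeniusNorm 1 A = ‖A‖ := by
  rw [weightedFrobeniusNorm, frobenius_norm_def, ← Real.sqrt_eq_rpow]
  simp only [Matrix.mul_one, trace, diag_apply, mul_apply, conjTranspose_apply, RCLike.star_def,
    RCLike.mul_conj, map_sum, Real.rpow_ofNat, ← RCLike.ofReal_pow, RCLike.ofReal_re]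

theorem weightedFrobeniusNorm_smul_one [DecidableEq n] {c : ℝ} (hc : 0 ≤ c) (A : Matrix m n 𝕜) :
    weightedFrobeniusNorm (c • 1) A = √c * ‖A‖ := by
  rw [← weightedFrobeniusNorm_one, weightedFrobeniusNorm, weightedFrobeniusNorm,
    ← Real.sqrt_mul hc, Matrix.mul_smul, Matrix.smul_mul, trace_smul, RCLike.smul_re]

theorem weightedFrobeniusNorm_mono {W W' : Matrix n n 𝕜} (h : (W' - W).PosSemidef)
    (A : Matrix m n 𝕜) : weightedFrobeniusNorm W A ≤ weightedFrobeniusNorm W' A := by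
  have htrace : 0 ≤ RCLike.re (A * (W' - W) * Aᴴ).trace :=
    (RCLike.nonneg_iff.mp (h.mul_mul_conjTranspose_same A).trace_nonneg).1
  rw [Matrix.mul_sub, Matrix.sub_mul, trace_sub, map_sub, sub_nonneg] at htrace
  exact Real.sqrt_le_sqrt htrace

theorem exists_weightedFrobeniusNorm_eq_norm_mul {W : Matrix n n 𝕜} (hW : W.PosSemidef) :
    ∃ B : Matrix n n 𝕜, ∀ A : Matrix m n 𝕜, weightedFrobeniusNorm W A = ‖A * B‖ := by
  classical
  open scoped MatrixOrder in
  obtain ⟨B, hB⟩ := CStarAlgebra.nonneg_iff_eq_mul_star_self.mp hW.nonneg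
  refine ⟨B, fun A ↦ ?_⟩
  rw [← weightedFrobeniusNorm_one, weightedFrobeniusNorm_mul, Matrix.mul_one, hB,
    star_eq_conjTranspose]

theorem weightedFrobeniusNorm_add_le {W : Matrix n n 𝕜} (hW : W.PosSemidef) (A B : Matrix m n 𝕜) :
    weightedFrobeniusNorm W (A + B) ≤ weightedFrobeniusNorm W A + weightedFrobeniusNorm W B := by
  obtain ⟨C, hC⟩ := exists_weightedFrobeniusNorm_eq_norm_mul (m := m) hW
  simpa only [hC, Matrix.add_mul] using norm_add_le (A * C) (B * C)

theorem weightedFrobeniusNorm_sub_le {W : Matrix n n 𝕜} (hW : W.PosSemidef) (A B : Matrix m n 𝕜) :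
    weightedFrobeniusNorm W (A - B) ≤ weightedFrobeniusNorm W A + weightedFrobeniusNorm W B := by
  obtain ⟨C, hC⟩ := exists_weightedFrobeniusNorm_eq_norm_mul (m := m) hW
  simpa only [hC, Matrix.sub_mul] using norm_sub_le (A * C) (B * C)

theorem weightedFrobeniusNorm_mul_mul_inv_le [DecidableEq n] {S T : Matrix n n 𝕜}
    (hS : S.PosSemidef) (hT : T.PosSemidef) (hu : IsUnit (S + T)) (A : Matrix m n 𝕜) :
    weightedFrobeniusNorm (S + T) (A * S * (S + T)⁻¹) ≤ weightedFrobeniusNorm S A := by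
  rw [weightedFrobeniusNorm_mul_inv (hS.add hT).isHermitian hu, weightedFrobeniusNorm_mul,
    hS.isHermitian.eq]
  exact weightedFrobeniusNorm_mono (posSemidef_sub_mul_inv_add_mul hS hT hu) A

end WeightedFrobeniusNorm

theorem ridge_estimator_sub_eq {R n d m : Type*} [CommRing R] [StarRing R] [Fintype n] [Fintype d]
    [DecidableEq d] {Φ : Matrix n d R} {G Ghat : Matrix m d R} {Z : Matrix n m R}
    {Λ : Matrix d d R} (hΛ : Λ.IsHermitian) (hu : IsUnit (Λ + Φᴴ * Φ))
    (hGhat : Ghatᴴ = (Λ + Φᴴ * Φ)⁻¹ * Φᴴ * (Φ * Gᴴ + Z)) :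
    Ghat - G = Zᴴ * Φ * (Λ + Φᴴ * Φ)⁻¹ - G * Λ * (Λ + Φᴴ * Φ)⁻¹ := by
  set V := Λ + Φᴴ * Φ
  have hVinv : (V⁻¹)ᴴ = V⁻¹ := (hΛ.add (isHermitian_conjTranspose_mul_self Φ)).inv.eq
  have hGhat' : Ghat = (G * (Φᴴ * Φ) + Zᴴ * Φ) * V⁻¹ := by
    rw [← conjTranspose_conjTranspose Ghat, hGhat]
    simp only [conjTranspose_mul, conjTranspose_add, conjTranspose_conjTranspose, hVinv,
      Matrix.add_mul, Matrix.mul_assoc]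
  have hG : G = (G * Λ + G * (Φᴴ * Φ)) * V⁻¹ := by
    rw [← Matrix.mul_add, mul_nonsing_inv_cancel_right _ _ ((isUnit_iff_isUnit_det V).mp hu)]
  calc Ghat - G
    _ = (G * (Φᴴ * Φ) + Zᴴ * Φ) * V⁻¹ - (G * Λ + G * (Φᴴ * Φ)) * V⁻¹ := by rw [← hGhat', ← hG]
    _ = Zᴴ * Φ * V⁻¹ - G * Λ * V⁻¹ := by simp only [Matrix.add_mul]; abel

open scoped ComplexOrder in
theorem ridge_regression_error_decomposition_general {𝕜 n d m : Type*} [RCLike 𝕜] [Fintype n]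
    [Fintype d] [DecidableEq d] [Fintype m] (Φ : Matrix n d 𝕜) (G Ghat : Matrix m d 𝕜)
    (E M Y : Matrix n m 𝕜) (Λ V : Matrix d d 𝕜) (hΛ : Λ.PosSemidef) (hu : IsUnit V)
    (hY : Y = Φ * Gᴴ + E + M) (hV : V = Λ + Φᴴ * Φ) (hGhat : Ghatᴴ = V⁻¹ * Φᴴ * Y) :
    weightedFrobeniusNorm V (Ghat - G) ≤
      weightedFrobeniusNorm V⁻¹ (Eᴴ * Φ) + weightedFrobeniusNorm V⁻¹ (Mᴴ * Φ) +
        weightedFrobeniusNorm Λ G := by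
  have hΦ : (Φᴴ * Φ).PosSemidef := posSemidef_conjTranspose_mul_self Φ
  have hVpos : V.PosSemidef := hV ▸ hΛ.add hΦ
  have herror : Ghat - G = Eᴴ * Φ * V⁻¹ + Mᴴ * Φ * V⁻¹ - G * Λ * V⁻¹ := by
    subst hV
    rw [hY, add_assoc] at hGhat
    rw [ridge_estimator_sub_eq hΛ.isHermitian hu hGhat, conjTranspose_add, Matrix.add_mul,
      Matrix.add_mul]
  have hbias : weightedFrobeniusNorm V (G * Λ * V⁻¹) ≤ weightedFrobeniusNorm Λ G := by
    subst hV
    exact weightedFrobeniusNorm_mul_mul_inv_le hΛ hΦ hu G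
  rw [herror, ← weightedFrobeniusNorm_mul_inv hVpos.isHermitian hu,
    ← weightedFrobeniusNorm_mul_inv hVpos.isHermitian hu]
  exact (weightedFrobeniusNorm_sub_le hVpos _ _).trans
    (add_le_add (weightedFrobeniusNorm_add_le hVpos _ _) hbias)

/-- deterministic error decomposition for the ridge-regression estimator.
If `Y = Φ Gᵀ + E + M`, `V = λ I + Φᵀ Φ` and `Ĝᵀ = V⁻¹ Φᵀ Y`, then
`√(Tr((Ĝ − G) V (Ĝ − G)ᵀ)) ≤ √(Tr(Eᵀ Φ V⁻¹ Φᵀ E)) + √(Tr(Mᵀ Φ V⁻¹ Φᵀ M)) + √λ ‖G‖_F`. -/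
theorem ridge_regression_error_decomposition {N d m : ℕ}
    (Φ : Matrix (Fin N) (Fin d) ℝ) (G Ghat : Matrix (Fin m) (Fin d) ℝ)
    (E M Y : Matrix (Fin N) (Fin m) ℝ) (V : Matrix (Fin d) (Fin d) ℝ)
    (lam : ℝ) (hlam : 0 < lam)
    (hY : Y = Φ * Gᵀ + E + M)
    (hV : V = lam • (1 : Matrix (Fin d) (Fin d) ℝ) + Φᵀ * Φ)
    (hGhat : Ghatᵀ = V⁻¹ * Φᵀ * Y) :
    Real.sqrt (((Ghat - G) * V * (Ghat - G)ᵀ).trace) ≤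
      Real.sqrt ((Eᵀ * Φ * V⁻¹ * Φᵀ * E).trace) +
        Real.sqrt ((Mᵀ * Φ * V⁻¹ * Φᵀ * M).trace) +
        Real.sqrt lam * ‖G‖ := by
  have hV_pos : V.PosDef :=
    hV ▸ (PosDef.one.smul hlam).add_posSemidef (posSemidef_conjTranspose_mul_self Φ)
  rw [← weightedFrobeniusNorm_smul_one hlam.le]
  simpa [weightedFrobeniusNorm, Matrix.mul_assoc] using
    ridge_regression_error_decomposition_general Φ G Ghat E M Y (lam • 1) V
      (PosSemidef.one.smul hlam.le) hV_pos.isUnit hY hV hGhat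
end
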